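/- For any integer k ≥ 1 and any integer c, the number φ_2(3^k, c) of pairs of exceptional units of ℤ_{3^k} summing to c modulo 3^k equals 3^{k-1} if c ≡ 1 (mod 3), and equals 0 otherwise. -/

import Mathlib

/-- `phi k n c` is the number of `k`-tuples of exceptional units of `ℤ/nℤ`
(i.e. elements `u` with both `u` and `1 - u` units) summing to `c` modulo `n`. -/
noncomputable def phi (k n : ℕ) (c : ℤ) : ℕ :=
  Nat.card {x : Fin k → ZMod n //
    (∀ i, IsUnit (x i) ∧ IsUnit (1 - x i)) ∧ ∑ i, x i = (c : ZMod n)}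

lemma isUnit_three_pow_iff (m : ℕ) (f : ZMod (3 ^ (m + 1)) →+* ZMod 3) (x : ZMod (3 ^ (m + 1))) :
    IsUnit x ↔ f x ≠ 0 := by
  have : NeZero (3 ^ (m + 1)) := ⟨by positivity⟩
  obtain ⟨n, rfl⟩ : ∃ n : ℕ, (n : ZMod (3 ^ (m + 1))) = x := ⟨x.val, ZMod.natCast_zmod_val x⟩
  rw [ZMod.isUnit_iff_coprime, map_natCast, Ne, ZMod.natCast_eq_zero_iff,
    Nat.coprime_pow_right_iff (Nat.succ_pos m), Nat.coprime_comm,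
    Nat.Prime.coprime_iff_not_dvd Nat.prime_three]

lemma exceptional_three_pow_iff (m : ℕ) (f : ZMod (3 ^ (m + 1)) →+* ZMod 3)
    (x : ZMod (3 ^ (m + 1))) :
    (IsUnit x ∧ IsUnit (1 - x)) ↔ f x = 2 := by
  rw [isUnit_three_pow_iff m f, isUnit_three_pow_iff m f, map_sub, map_one]
  generalize f x = y
  revert y
  decide

theorem phi_two_three_pow (k : ℕ) (hk : 1 ≤ k) (c : ℤ) :
    phi 2 (3 ^ k) c = if c % 3 = 1 then 3 ^ (k - 1) else 0 := by
  obtain ⟨m, rfl⟩ : ∃ m, k = m + 1 := ⟨k - 1, by omega⟩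
  have : NeZero (3 ^ (m + 1)) := ⟨by positivity⟩
  let f : ZMod (3 ^ (m + 1)) →+* ZMod 3 := ZMod.castHom (dvd_pow_self 3 (Nat.succ_ne_zero m)) _
  have hc : c % 3 = 1 ↔ (c : ZMod 3) = 1 := by
    have := ZMod.intCast_eq_intCast_iff c 1 3
    rw [Int.cast_one] at this
    rw [this, Int.ModEq]
    norm_num
  unfold phi
  simp only [exceptional_three_pow_iff m f, Fin.forall_fin_two, Fin.sum_univ_two, Nat.add_sub_cancel]
  split_ifs with h
  · rw [hc] at h
    have h3 : (3 : ZMod 3) = 0 := rfl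
    have key : ∀ i : ℕ, f (3 * (i : ZMod (3 ^ (m + 1))) + 2) = 2 := by
      intro i
      rw [map_add, map_mul, map_ofNat, map_ofNat, h3, zero_mul, zero_add]
    have key2 : ∀ i : ℕ, f (c - (3 * (i : ZMod (3 ^ (m + 1))) + 2)) = 2 := by
      intro i
      rw [map_sub, key, map_intCast, h]
      rfl
    rw [← Nat.card_fin (3 ^ m)]
    symm
    refine Nat.card_eq_of_bijective (fun i : Fin (3 ^ m) =>
      ⟨![3 * ((i : ℕ) : ZMod (3 ^ (m + 1))) + 2, c - (3 * ((i : ℕ) : ZMod (3 ^ (m + 1))) + 2)],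
        ⟨key _, key2 _⟩, by simp⟩) ⟨?_, ?_⟩
    · intro i j hij
      have h0 := congrFun (congrArg Subtype.val hij) 0
      simp only [Matrix.cons_val_zero, add_left_inj] at h0
      have h1 : ((3 * (i : ℕ) : ℕ) : ZMod (3 ^ (m + 1))) = ((3 * (j : ℕ) : ℕ)) := by
        push_cast; exact h0
      rw [ZMod.natCast_eq_natCast_iff] at h1
      have h2 := h1.eq_of_lt_of_lt (by have := i.2; rw [pow_succ]; omega)
        (by have := j.2; rw [pow_succ]; omega)
      ext; omega
    · rintro ⟨x, ⟨hx0, hx1⟩, hs⟩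
      have hv : (((x 0).val : ℕ) : ZMod (3 ^ (m + 1))) = x 0 := ZMod.natCast_zmod_val _
      have hlt := ZMod.val_lt (x 0)
      have hmod : (x 0).val % 3 = 2 := by
        rw [← hv, map_natCast] at hx0
        exact (ZMod.natCast_eq_natCast_iff _ 2 3).1 hx0
      have hp : 3 ^ (m + 1) = 3 ^ m * 3 := pow_succ 3 m
      have hx : 3 * (((x 0).val / 3 : ℕ) : ZMod (3 ^ (m + 1))) + 2 = x 0 := by
        have e : 3 * ((x 0).val / 3) + 2 = (x 0).val := by omega
        have := congrArg (Nat.cast : ℕ → ZMod (3 ^ (m + 1))) e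
        rw [hv] at this
        push_cast at this
        exact this
      refine ⟨⟨(x 0).val / 3, by omega⟩, Subtype.ext ?_⟩
      funext i
      fin_cases i
      · exact hx
      · simp [hx, ← hs]
  · rw [hc] at h
    rw [Nat.card_eq_zero]
    left
    constructor
    rintro ⟨x, ⟨h0, h1⟩, hs⟩
    apply h
    have := congrArg f hs
    rw [map_add, h0, h1, map_intCast] at this
    rw [← this]; rfl
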